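/- arXiv:2503.24179 — 6 statements merged into one kernel-verified Lean document; each statement's English description precedes it below -/
import Mathlib

section
/- Suppose 1/3 ≤ r < 1 and the reduction rate of the mixed transport is at most r, i.e., (x1 + x2 + d3 + z2 + z1)/(d1 + d2 + d3) ≤ r. Then x + y ≤ (2r/(1-r))·d1 (equivalently, (1-r)·(x + y) ≤ 2r·d1). -/
/-!
Let `L` be the length of the mixed route `t1s → t2s → t3s → t3e → t2e → t1e`. The detour
`t1s → t3s → t1e` is at most `L`. Driving lane 2 by way of lane 1 shows that `d2 ≤ x1 + d1 + z1`,
and `x1`, `d3`, `z1` are distinct legs of the mixed route, so `d1 + d2 + d3 ≤ 2 * d1 + L`.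
A reduction rate at most `r` therefore gives `L ≤ r * (2 * d1 + L)`, which is solved for `L`.
-/

theorem le_div_one_sub_mul_of_le_mul_add {K : Type*} [Field K] [LinearOrder K]
    [IsStrictOrderedRing K] {a b r : K} (hr : r < 1) (h : b ≤ r * (a + b)) :
    b ≤ r / (1 - r) * a := by
  rw [div_mul_eq_mul_div, le_div_iff₀ (sub_pos.2 hr)]
  linarith

section MixedTransport

variable {B : Type*} [PseudoMetricSpace B] (t1s t1e t2s t2e t3s t3e : B)

/-- The length of the mixed transport of three lanes, lane `i` running from `tis` to `tie`: the
lanes are started in the order 1, 2, 3 and finished in the order 3, 2, 1. It is the numerator of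
the reduction rate. The arguments are grouped by lane, not in the order of the route. -/
def mixedTransportLength : ℝ :=
  dist t1s t2s + dist t2s t3s + dist t3s t3e + dist t3e t2e + dist t2e t1e

theorem dist_add_dist_le_mixedTransportLength :
    dist t1s t3s + dist t3s t1e ≤ mixedTransportLength t1s t1e t2s t2e t3s t3e := by
  have outbound : dist t1s t3s ≤ dist t1s t2s + dist t2s t3s := dist_triangle ..
  have inbound : dist t3s t1e ≤ dist t3s t3e + dist t3e t2e + dist t2e t1e := dist_triangle4 ..
  unfold mixedTransportLength
  linarith

theorem sum_lanes_le_two_mul_add_mixedTransportLength :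
    dist t1s t1e + dist t2s t2e + dist t3s t3e ≤
      2 * dist t1s t1e + mixedTransportLength t1s t1e t2s t2e t3s t3e := by
  have lane2_via_lane1 : dist t2s t2e ≤ dist t1s t2s + dist t1s t1e + dist t2e t1e := by
    simpa only [dist_comm t2s t1s, dist_comm t1e t2e] using dist_triangle4 t2s t1s t1e t2e
  have pickup_nonneg : 0 ≤ dist t2s t3s := dist_nonneg
  have delivery_nonneg : 0 ≤ dist t3e t2e := dist_nonneg
  unfold mixedTransportLength
  linarith

variable {t1s t1e t2s t2e t3s t3e}

theorem stmt0_general (hd : 0 < dist t1s t1e + dist t2s t2e + dist t3s t3e) {r : ℝ} (hr : r < 1)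
    (hred : mixedTransportLength t1s t1e t2s t2e t3s t3e /
      (dist t1s t1e + dist t2s t2e + dist t3s t3e) ≤ r) :
    dist t1s t3s + dist t3s t1e ≤ 2 * r / (1 - r) * dist t1s t1e := by
  set L := mixedTransportLength t1s t1e t2s t2e t3s t3e
  have detour_le : dist t1s t3s + dist t3s t1e ≤ L := dist_add_dist_le_mixedTransportLength ..
  have L_nonneg : 0 ≤ L := le_trans (by positivity) detour_le
  have r_nonneg : 0 ≤ r := (div_nonneg L_nonneg hd.le).trans hred
  have L_le : L ≤ r * (2 * dist t1s t1e + L) :=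
    calc
      L ≤ r * (dist t1s t1e + dist t2s t2e + dist t3s t3e) := (div_le_iff₀ hd).1 hred
      _ ≤ r * (2 * dist t1s t1e + L) :=
        mul_le_mul_of_nonneg_left (sum_lanes_le_two_mul_add_mixedTransportLength ..) r_nonneg
  calc
    dist t1s t3s + dist t3s t1e ≤ L := detour_le
    _ ≤ r / (1 - r) * (2 * dist t1s t1e) := le_div_one_sub_mul_of_le_mul_add hr L_le
    _ = 2 * r / (1 - r) * dist t1s t1e := by ring

end MixedTransport

theorem stmt0 {B : Type*} [MetricSpace B] (t1s t1e t2s t2e t3s t3e : B)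
    (hd1 : 0 < dist t1s t1e) (hd2 : 0 < dist t2s t2e) (hd3 : 0 < dist t3s t3e)
    (r : ℝ) (hr1 : 1/3 ≤ r) (hr2 : r < 1)
    (hred : (dist t1s t2s + dist t2s t3s + dist t3s t3e + dist t3e t2e + dist t2e t1e) / (dist t1s t1e + dist t2s t2e + dist t3s t3e) ≤ r) :
    dist t1s t3s + dist t3s t1e ≤ (2*r/(1-r)) * (dist t1s t1e) :=
  stmt0_general (by positivity) hr2 hred
end

section
/- Suppose 1/3 ≤ r < 1 and the reduction rate of the mixed transport is at most r, i.e., (x1 + x2 + d3 + z2 + z1)/(d1 + d2 + d3) ≤ r. Then (1 - 2r)·d3 + (1 - r)·z ≤ (r - 1)·x + r·d1. -/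
/-!
Let `L = x1 + x2 + d3 + z2 + z1` be the length of the mixed route. The route passes through both
ends of lane 2, so `d2 ≤ L`, and this bound lets `L ≤ r (d1 + d2 + d3)` be absorbed into
`(1 - r) L ≤ r (d1 + d3)`. Skipping the two ends of lane 2 only shortens the route, so
`x + d3 + z ≤ L`. For `r ≤ 1` the two combine to `(1 - r) (x + d3 + z) ≤ r (d1 + d3)`, which is
the claim rearranged; for `r ≥ 1` its two sides have opposite signs.
-/

section MixedRoute

variable {B : Type*} [PseudoMetricSpace B]

/-- The length of the route of a mixed transport, i.e. the numerator of its reduction rate: the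
lanes are loaded in the order 1, 2, 3 and unloaded in the order 3, 2, 1. The arguments are listed in
the order in which the route visits them. -/
def mixedRouteLength (t1s t2s t3s t3e t2e t1e : B) : ℝ :=
  dist t1s t2s + dist t2s t3s + dist t3s t3e + dist t3e t2e + dist t2e t1e

variable (t1s t2s t3s t3e t2e t1e : B)

theorem mixedRouteLength_nonneg : 0 ≤ mixedRouteLength t1s t2s t3s t3e t2e t1e := by
  unfold mixedRouteLength
  positivity

theorem dist_le_mixedRouteLength : dist t2s t2e ≤ mixedRouteLength t1s t2s t3s t3e t2e t1e := by
  have h_via_lane3 : dist t2s t2e ≤ dist t2s t3s + dist t3s t3e + dist t3e t2e :=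
    dist_triangle4 t2s t3s t3e t2e
  unfold mixedRouteLength
  linarith [dist_nonneg (x := t1s) (y := t2s), dist_nonneg (x := t2e) (y := t1e)]

theorem dist_add_dist_add_dist_le_mixedRouteLength :
    dist t1s t3s + dist t3s t3e + dist t3e t1e ≤ mixedRouteLength t1s t2s t3s t3e t2e t1e := by
  unfold mixedRouteLength
  linarith [dist_triangle t1s t2s t3s, dist_triangle t3e t2e t1e]

variable {t1s t2s t3s t3e t2e t1e} {r : ℝ}

theorem one_sub_mul_mixedRouteLength_le (hr : 0 ≤ r)
    (h : mixedRouteLength t1s t2s t3s t3e t2e t1e ≤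
      r * (dist t1s t1e + dist t2s t2e + dist t3s t3e)) :
    (1 - r) * mixedRouteLength t1s t2s t3s t3e t2e t1e ≤ r * (dist t1s t1e + dist t3s t3e) := by
  have h_lane2 : r * dist t2s t2e ≤ r * mixedRouteLength t1s t2s t3s t3e t2e t1e :=
    mul_le_mul_of_nonneg_left (dist_le_mixedRouteLength ..) hr
  linarith

theorem one_sub_mul_dist_add_dist_add_dist_le (hr : 0 ≤ r)
    (h : mixedRouteLength t1s t2s t3s t3e t2e t1e ≤
      r * (dist t1s t1e + dist t2s t2e + dist t3s t3e)) :
    (1 - r) * (dist t1s t3s + dist t3s t3e + dist t3e t1e) ≤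
      r * (dist t1s t1e + dist t3s t3e) := by
  rcases le_total r 1 with hr_le | hr_ge
  · calc (1 - r) * (dist t1s t3s + dist t3s t3e + dist t3e t1e)
        ≤ (1 - r) * mixedRouteLength t1s t2s t3s t3e t2e t1e :=
          mul_le_mul_of_nonneg_left (dist_add_dist_add_dist_le_mixedRouteLength ..)
            (sub_nonneg.2 hr_le)
      _ ≤ r * (dist t1s t1e + dist t3s t3e) := one_sub_mul_mixedRouteLength_le hr h
  · calc (1 - r) * (dist t1s t3s + dist t3s t3e + dist t3e t1e)
        ≤ 0 := mul_nonpos_of_nonpos_of_nonneg (sub_nonpos.2 hr_ge) (by positivity)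
      _ ≤ r * (dist t1s t1e + dist t3s t3e) := by positivity

end MixedRoute

theorem stmt1_general {B : Type*} [PseudoMetricSpace B] {t1s t1e t2s t2e t3s t3e : B}
    (hd : 0 < dist t1s t1e + dist t2s t2e + dist t3s t3e) {r : ℝ}
    (hred : mixedRouteLength t1s t2s t3s t3e t2e t1e /
      (dist t1s t1e + dist t2s t2e + dist t3s t3e) ≤ r) :
    (1 - 2 * r) * dist t3s t3e + (1 - r) * dist t3e t1e ≤
      (r - 1) * dist t1s t3s + r * dist t1s t1e := by
  have hr : 0 ≤ r := (div_nonneg (mixedRouteLength_nonneg ..) hd.le).trans hred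
  have h_skip_lane2 : (1 - r) * (dist t1s t3s + dist t3s t3e + dist t3e t1e) ≤
      r * (dist t1s t1e + dist t3s t3e) :=
    one_sub_mul_dist_add_dist_add_dist_le hr ((div_le_iff₀ hd).1 hred)
  linarith

theorem stmt1 {B : Type*} [MetricSpace B] (t1s t1e t2s t2e t3s t3e : B)
    (hd1 : 0 < dist t1s t1e) (hd2 : 0 < dist t2s t2e) (hd3 : 0 < dist t3s t3e)
    (r : ℝ) (hr1 : 1/3 ≤ r) (hr2 : r < 1)
    (hred : (dist t1s t2s + dist t2s t3s + dist t3s t3e + dist t3e t2e + dist t2e t1e) / (dist t1s t1e + dist t2s t2e + dist t3s t3e) ≤ r) :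
    (1 - 2*r) * (dist t3s t3e) + (1 - r) * (dist t3e t1e) ≤ (r - 1) * (dist t1s t3s) + r * (dist t1s t1e) :=
  stmt1_general (add_pos (add_pos hd1 hd2) hd3) hred
end

section
/- Suppose 1/3 ≤ r < 1 and the reduction rate of the mixed transport is at most r, i.e., (x1 + x2 + d3 + z2 + z1)/(d1 + d2 + d3) ≤ r. Then x1 + (1 - r)·x2 ≤ r·d1 + (2r - 1)·d3 - (1 - r)·z. -/
/-!
The second lane is no longer than the detour `t2s → t3s → t3e → t2e`, so the bound on the length
of the mixed transport becomes one that does not mention `d2`. For `0 ≤ r ≤ 2` the two remaining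
distances `z1` and `z2` are traded for `z` by a triangle inequality with weight `1 - r ∈ [-1, 1]`.
For `r ≥ 2` the triangle inequality along `t1s → t1e → t3e → t3s → t2s` alone gives the bound.
-/

section PseudoMetric

variable {B : Type*} [PseudoMetricSpace B]

theorem mul_dist_le_mul_dist_add_dist {c : ℝ} (hc : |c| ≤ 1) (x y z : B) :
    c * dist x z ≤ c * dist x y + dist y z := by
  have h_diff : |dist x z - dist x y| ≤ dist y z := by
    simpa only [Real.dist_eq, dist_comm z y] using dist_dist_dist_le_right x z y
  have h_weighted : c * (dist x z - dist x y) ≤ dist y z :=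
    calc c * (dist x z - dist x y) ≤ |c * (dist x z - dist x y)| := le_abs_self _
      _ = |c| * |dist x z - dist x y| := abs_mul _ _
      _ ≤ 1 * dist y z := by gcongr
      _ = dist y z := one_mul _
  linarith

theorem dist_add_one_sub_mul_dist_le_of_length_le {t1s t1e t2s t2e t3s t3e : B} {r : ℝ}
    (hr0 : 0 ≤ r) (hr2 : r ≤ 2)
    (hlength : dist t1s t2s + dist t2s t3s + dist t3s t3e + dist t3e t2e + dist t2e t1e ≤
      r * (dist t1s t1e + dist t2s t2e + dist t3s t3e)) :
    dist t1s t2s + (1 - r) * dist t2s t3s ≤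
      r * dist t1s t1e + (2 * r - 1) * dist t3s t3e - (1 - r) * dist t3e t1e := by
  have h_detour : r * dist t2s t2e ≤ r * (dist t2s t3s + dist t3s t3e + dist t3e t2e) :=
    mul_le_mul_of_nonneg_left (dist_triangle4 t2s t3s t3e t2e) hr0
  have h_ends : (1 - r) * dist t3e t1e ≤ (1 - r) * dist t3e t2e + dist t2e t1e :=
    mul_dist_le_mul_dist_add_dist (abs_le.2 ⟨by linarith, by linarith⟩) t3e t2e t1e
  linarith

theorem dist_add_one_sub_mul_dist_le_of_two_le {r : ℝ} (hr : 2 ≤ r) (t1s t1e t2s t3s t3e : B) :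
    dist t1s t2s + (1 - r) * dist t2s t3s ≤
      r * dist t1s t1e + (2 * r - 1) * dist t3s t3e - (1 - r) * dist t3e t1e := by
  have h_path : dist t1s t2s ≤ dist t1s t1e + dist t3e t1e + dist t3s t3e + dist t2s t3s :=
    calc dist t1s t2s ≤ dist t1s t1e + dist t1e t3e + dist t3e t2s := dist_triangle4 _ _ _ _
      _ ≤ dist t1s t1e + dist t1e t3e + (dist t3e t3s + dist t3s t2s) := by
        gcongr
        exact dist_triangle _ _ _
      _ = dist t1s t1e + dist t3e t1e + dist t3s t3e + dist t2s t3s := by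
        rw [dist_comm t1e t3e, dist_comm t3e t3s, dist_comm t3s t2s, add_assoc _ (dist t3s t3e)]
  have h_d1 : dist t1s t1e ≤ r * dist t1s t1e :=
    le_mul_of_one_le_left dist_nonneg (by linarith)
  have h_d3 : dist t3s t3e ≤ (2 * r - 1) * dist t3s t3e :=
    le_mul_of_one_le_left dist_nonneg (by linarith)
  have h_z : dist t3e t1e ≤ (r - 1) * dist t3e t1e :=
    le_mul_of_one_le_left dist_nonneg (by linarith)
  have h_x2 : dist t2s t3s ≤ (r - 1) * dist t2s t3s :=
    le_mul_of_one_le_left dist_nonneg (by linarith)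
  linarith

theorem stmt2_general (t1s t1e t2s t2e t3s t3e : B)
    (hlanes : 0 < dist t1s t1e + dist t2s t2e + dist t3s t3e) (r : ℝ)
    (hred : (dist t1s t2s + dist t2s t3s + dist t3s t3e + dist t3e t2e + dist t2e t1e) /
      (dist t1s t1e + dist t2s t2e + dist t3s t3e) ≤ r) :
    dist t1s t2s + (1 - r) * dist t2s t3s ≤
      r * dist t1s t1e + (2 * r - 1) * dist t3s t3e - (1 - r) * dist t3e t1e := by
  have hr0 : 0 ≤ r := le_trans (by positivity) hred
  rcases le_total r 2 with hr2 | hr2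
  · exact dist_add_one_sub_mul_dist_le_of_length_le hr0 hr2 ((div_le_iff₀ hlanes).1 hred)
  · exact dist_add_one_sub_mul_dist_le_of_two_le hr2 t1s t1e t2s t3s t3e

end PseudoMetric

theorem stmt2 {B : Type*} [MetricSpace B] (t1s t1e t2s t2e t3s t3e : B)
    (hd1 : 0 < dist t1s t1e) (hd2 : 0 < dist t2s t2e) (hd3 : 0 < dist t3s t3e)
    (r : ℝ) (hr1 : 1/3 ≤ r) (hr2 : r < 1)
    (hred : (dist t1s t2s + dist t2s t3s + dist t3s t3e + dist t3e t2e + dist t2e t1e) / (dist t1s t1e + dist t2s t2e + dist t3s t3e) ≤ r) :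
    dist t1s t2s + (1 - r) * (dist t2s t3s) ≤ r * (dist t1s t1e) + (2*r - 1) * (dist t3s t3e) - (1 - r) * (dist t3e t1e) :=
  stmt2_general t1s t1e t2s t2e t3s t3e (by positivity) r hred
end

section
/- Suppose 1/3 ≤ r < 1 and the reduction rate of the mixed transport is at most r, i.e., (x1 + x2 + d3 + z2 + z1)/(d1 + d2 + d3) ≤ r. Then all four of the following pruning conditions hold simultaneously: (i) x + y ≤ (2r/(1-r))·d1; (ii) (1 - 2r)·d3 + (1 - r)·z ≤ (r - 1)·x + r·d1; (iii) x1 + (1 - r)·x2 ≤ r·d1 + (2r - 1)·d3 - (1 - r)·z; (iv) d2 ≥ (1/r)·(x1 + x2 + z) - d1 + ((1 - r)/r)·d3. (Hence the pruning algorithm never discards a mixed transport whose reduction rate is at most r, and it correctly outputs the set of all such mixed transports.) -/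
/-!
A rate of at most `r` says that the shared route is no longer than `r` times the lanes together. The
second lane is bounded by two detours: the inner part `s₂ → s₃ → e₃ → e₂` of the route, and the
path `s₂ → s₁ → e₁ → e₂` along the first lane. The inner detour gives conditions (iii) and (ii), the
outer one gives (i), and (iv) only shortcuts `e₃ → e₂ → e₁`. No lane is longer than the route, so
the rate is at least `1/3`.
-/

/-- Three lanes, the `i`-th leading from `sᵢ` to `eᵢ`, served by one vehicle along the nested route
`s₁ → s₂ → s₃ → e₃ → e₂ → e₁`. -/
structure MixedTransport (B : Type*) where
  s₁ : B
  e₁ : B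
  s₂ : B
  e₂ : B
  s₃ : B
  e₃ : B

namespace MixedTransport

variable {B : Type*} [PseudoMetricSpace B] (T : MixedTransport B) {r : ℝ}

/-- The length `x1 + x2 + d3 + z2 + z1` of the shared route. -/
def routeLength : ℝ :=
  dist T.s₁ T.s₂ + dist T.s₂ T.s₃ + dist T.s₃ T.e₃ + dist T.e₃ T.e₂ + dist T.e₂ T.e₁

/-- The total length `d1 + d2 + d3` of the lanes when they are driven separately. -/
def laneLength : ℝ :=
  dist T.s₁ T.e₁ + dist T.s₂ T.e₂ + dist T.s₃ T.e₃

/-- The ratio of the shared to the separate length; it is the junk value `0` when all lanes have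
length `0`. -/
noncomputable def reductionRate : ℝ :=
  T.routeLength / T.laneLength

theorem dist_s₁_s₃_add_dist_s₃_e₁_le_routeLength :
    dist T.s₁ T.s₃ + dist T.s₃ T.e₁ ≤ T.routeLength := by
  have outbound := dist_triangle T.s₁ T.s₂ T.s₃
  have inbound := dist_triangle4 T.s₃ T.e₃ T.e₂ T.e₁
  rw [routeLength]
  linarith

theorem dist_s₂_e₂_le_inner :
    dist T.s₂ T.e₂ ≤ dist T.s₂ T.s₃ + dist T.s₃ T.e₃ + dist T.e₃ T.e₂ :=
  dist_triangle4 _ _ _ _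

theorem dist_s₂_e₂_le_outer :
    dist T.s₂ T.e₂ ≤ dist T.s₁ T.s₂ + dist T.s₁ T.e₁ + dist T.e₂ T.e₁ := by
  simpa only [dist_comm T.s₂ T.s₁, dist_comm T.e₁ T.e₂] using
    dist_triangle4 T.s₂ T.s₁ T.e₁ T.e₂

theorem laneLength_le_three_mul_routeLength : T.laneLength ≤ 3 * T.routeLength := by
  have lane₁ : dist T.s₁ T.e₁ ≤ T.routeLength :=
    (dist_triangle _ _ _).trans T.dist_s₁_s₃_add_dist_s₃_e₁_le_routeLength
  have lane₂ : dist T.s₂ T.e₂ ≤ T.routeLength := by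
    rw [routeLength]
    linarith [T.dist_s₂_e₂_le_inner, dist_nonneg (x := T.s₁) (y := T.s₂),
      dist_nonneg (x := T.e₂) (y := T.e₁)]
  have lane₃ : dist T.s₃ T.e₃ ≤ T.routeLength := by
    have : 0 ≤ dist T.s₁ T.s₂ + dist T.s₂ T.s₃ := by positivity
    have : 0 ≤ dist T.e₃ T.e₂ + dist T.e₂ T.e₁ := by positivity
    rw [routeLength]
    linarith
  rw [laneLength]
  linarith

theorem one_third_le_reductionRate (hT : 0 < T.laneLength) : 1 / 3 ≤ T.reductionRate := by
  rw [reductionRate, le_div_iff₀ hT]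
  linarith [T.laneLength_le_three_mul_routeLength]

variable {T}

theorem one_sub_mul_routeLength_le (hr : 0 ≤ r) (h : T.routeLength ≤ r * T.laneLength) :
    (1 - r) * T.routeLength ≤ 2 * r * dist T.s₁ T.e₁ := by
  have detour : T.laneLength ≤ 2 * dist T.s₁ T.e₁ + T.routeLength := by
    have := T.dist_s₂_e₂_le_outer
    have : 0 ≤ dist T.s₂ T.s₃ + dist T.e₃ T.e₂ := by positivity
    rw [laneLength, routeLength]
    linarith
  linarith [mul_le_mul_of_nonneg_left detour hr]

theorem dist_s₁_s₃_add_dist_s₃_e₁_le (hr₀ : 0 ≤ r) (hr₁ : r < 1)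
    (h : T.routeLength ≤ r * T.laneLength) :
    dist T.s₁ T.s₃ + dist T.s₃ T.e₁ ≤ 2 * r / (1 - r) * dist T.s₁ T.e₁ := by
  have hr : 0 < 1 - r := sub_pos.2 hr₁
  rw [div_mul_eq_mul_div, le_div_iff₀' hr]
  calc (1 - r) * (dist T.s₁ T.s₃ + dist T.s₃ T.e₁)
      ≤ (1 - r) * T.routeLength :=
        mul_le_mul_of_nonneg_left T.dist_s₁_s₃_add_dist_s₃_e₁_le_routeLength hr.le
    _ ≤ 2 * r * dist T.s₁ T.e₁ := one_sub_mul_routeLength_le hr₀ h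

theorem dist_s₁_s₂_add_one_sub_mul_dist_s₂_s₃_le (hr₀ : 0 ≤ r) (hr₁ : r ≤ 1)
    (h : T.routeLength ≤ r * T.laneLength) :
    dist T.s₁ T.s₂ + (1 - r) * dist T.s₂ T.s₃ ≤
      r * dist T.s₁ T.e₁ + (2 * r - 1) * dist T.s₃ T.e₃ - (1 - r) * dist T.e₃ T.e₁ := by
  have detour := mul_le_mul_of_nonneg_left T.dist_s₂_e₂_le_inner hr₀
  have shortcut :=
    mul_le_mul_of_nonneg_left (dist_triangle T.e₃ T.e₂ T.e₁) (sub_nonneg.2 hr₁)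
  have : 0 ≤ r * dist T.e₂ T.e₁ := by positivity
  rw [routeLength, laneLength] at h
  linarith

theorem one_sub_two_mul_dist_s₃_e₃_add_le (hr₀ : 0 ≤ r) (hr₁ : r ≤ 1)
    (h : T.routeLength ≤ r * T.laneLength) :
    (1 - 2 * r) * dist T.s₃ T.e₃ + (1 - r) * dist T.e₃ T.e₁ ≤
      (r - 1) * dist T.s₁ T.s₃ + r * dist T.s₁ T.e₁ := by
  have shortcut :=
    mul_le_mul_of_nonneg_left (dist_triangle T.s₁ T.s₂ T.s₃) (sub_nonneg.2 hr₁)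
  have : 0 ≤ r * dist T.s₁ T.s₂ := by positivity
  linarith [dist_s₁_s₂_add_one_sub_mul_dist_s₂_s₃_le hr₀ hr₁ h]

theorem le_dist_s₂_e₂ (hr : 0 < r) (h : T.routeLength ≤ r * T.laneLength) :
    1 / r * (dist T.s₁ T.s₂ + dist T.s₂ T.s₃ + dist T.e₃ T.e₁) - dist T.s₁ T.e₁ +
      (1 - r) / r * dist T.s₃ T.e₃ ≤ dist T.s₂ T.e₂ := by
  have shortcut := dist_triangle T.e₃ T.e₂ T.e₁
  rw [routeLength, laneLength] at h
  calc 1 / r * (dist T.s₁ T.s₂ + dist T.s₂ T.s₃ + dist T.e₃ T.e₁) - dist T.s₁ T.e₁ +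
        (1 - r) / r * dist T.s₃ T.e₃
      = (dist T.s₁ T.s₂ + dist T.s₂ T.s₃ + dist T.e₃ T.e₁ - r * dist T.s₁ T.e₁ +
          (1 - r) * dist T.s₃ T.e₃) / r := by field_simp
    _ ≤ dist T.s₂ T.e₂ := by
        rw [div_le_iff₀' hr]
        linarith

end MixedTransport

open MixedTransport in
theorem stmt4_general {B : Type*} [PseudoMetricSpace B] (T : MixedTransport B)
    (hT : 0 < T.laneLength) {r : ℝ} (hr : r < 1) (hred : T.reductionRate ≤ r) :
    (dist T.s₁ T.s₃ + dist T.s₃ T.e₁ ≤ 2 * r / (1 - r) * dist T.s₁ T.e₁) ∧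
    ((1 - 2 * r) * dist T.s₃ T.e₃ + (1 - r) * dist T.e₃ T.e₁ ≤
      (r - 1) * dist T.s₁ T.s₃ + r * dist T.s₁ T.e₁) ∧
    (dist T.s₁ T.s₂ + (1 - r) * dist T.s₂ T.s₃ ≤
      r * dist T.s₁ T.e₁ + (2 * r - 1) * dist T.s₃ T.e₃ - (1 - r) * dist T.e₃ T.e₁) ∧
    (dist T.s₂ T.e₂ ≥
      1 / r * (dist T.s₁ T.s₂ + dist T.s₂ T.s₃ + dist T.e₃ T.e₁) - dist T.s₁ T.e₁ +
        (1 - r) / r * dist T.s₃ T.e₃) := by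
  have r_pos : 0 < r :=
    (one_div_pos.2 three_pos).trans_le ((T.one_third_le_reductionRate hT).trans hred)
  have budget : T.routeLength ≤ r * T.laneLength := (div_le_iff₀ hT).1 hred
  exact ⟨dist_s₁_s₃_add_dist_s₃_e₁_le r_pos.le hr budget,
    one_sub_two_mul_dist_s₃_e₃_add_le r_pos.le hr.le budget,
    dist_s₁_s₂_add_one_sub_mul_dist_s₂_s₃_le r_pos.le hr.le budget,
    le_dist_s₂_e₂ r_pos budget⟩

theorem stmt4 {B : Type*} [MetricSpace B] (t1s t1e t2s t2e t3s t3e : B)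
    (hd1 : 0 < dist t1s t1e) (hd2 : 0 < dist t2s t2e) (hd3 : 0 < dist t3s t3e)
    (r : ℝ) (hr1 : 1/3 ≤ r) (hr2 : r < 1)
    (hred : (dist t1s t2s + dist t2s t3s + dist t3s t3e + dist t3e t2e + dist t2e t1e) / (dist t1s t1e + dist t2s t2e + dist t3s t3e) ≤ r) :
    (dist t1s t3s + dist t3s t1e ≤ (2*r/(1-r)) * (dist t1s t1e)) ∧ ((1 - 2*r) * (dist t3s t3e) + (1 - r) * (dist t3e t1e) ≤ (r - 1) * (dist t1s t3s) + r * (dist t1s t1e)) ∧ (dist t1s t2s + (1 - r) * (dist t2s t3s) ≤ r * (dist t1s t1e) + (2*r - 1) * (dist t3s t3e) - (1 - r) * (dist t3e t1e)) ∧ (dist t2s t2e ≥ (1/r) * (dist t1s t2s + dist t2s t3s + dist t3e t1e) - (dist t1s t1e) + ((1 - r)/r) * (dist t3s t3e)) :=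
  stmt4_general ⟨t1s, t1e, t2s, t2e, t3s, t3e⟩ (add_pos (add_pos hd1 hd2) hd3) hr2 hred
end

section
/- The reduction rate of any mixed transport is at least 1/3; that is, (x1 + x2 + d3 + z2 + z1)/(d1 + d2 + d3) ≥ 1/3 (equivalently, d1 + d2 + d3 ≤ 3·(x1 + x2 + d3 + z2 + z1)). -/
section Route

variable {B ι : Type*} [PseudoMetricSpace B]

/-- The length of the route that visits `p 0, p 1, …, p n` in this order; the values of `p` beyond
index `n` are irrelevant. -/
def routeLength (p : ℕ → B) (n : ℕ) : ℝ :=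
  ∑ i ∈ Finset.range n, dist (p i) (p (i + 1))

/-- The reduction rate of a transport: the length of the route `p 0, …, p n` relative to the total
length of the lanes it serves. Lane `i ∈ I` runs from the `s i`-th to the `e i`-th point of the
route, so it is served when `s i ≤ n` and `e i ≤ n`. -/
noncomputable def reductionRate (p : ℕ → B) (n : ℕ) (I : Finset ι) (s e : ι → ℕ) : ℝ :=
  routeLength p n / ∑ i ∈ I, dist (p (s i)) (p (e i))

theorem dist_le_routeLength (p : ℕ → B) {n a b : ℕ} (ha : a ≤ n) (hb : b ≤ n) :
    dist (p a) (p b) ≤ routeLength p n := by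
  wlog hab : a ≤ b generalizing a b
  · rw [dist_comm]
    exact this hb ha (le_of_not_ge hab)
  calc dist (p a) (p b)
      ≤ ∑ i ∈ Finset.Ico a b, dist (p i) (p (i + 1)) := dist_le_Ico_sum_dist p hab
    _ ≤ routeLength p n := by
      refine Finset.sum_le_sum_of_subset_of_nonneg (fun i hi ↦ ?_) fun _ _ _ ↦ dist_nonneg
      exact Finset.mem_range.2 ((Finset.mem_Ico.1 hi).2.trans_le hb)

theorem sum_dist_le_card_mul_routeLength (p : ℕ → B) {n : ℕ} {I : Finset ι} {s e : ι → ℕ}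
    (hs : ∀ i ∈ I, s i ≤ n) (he : ∀ i ∈ I, e i ≤ n) :
    ∑ i ∈ I, dist (p (s i)) (p (e i)) ≤ I.card * routeLength p n := by
  rw [← nsmul_eq_mul]
  exact Finset.sum_le_card_nsmul I _ _ fun i hi ↦ dist_le_routeLength p (hs i hi) (he i hi)

theorem stmt5_general (p : ℕ → B) {n : ℕ} {I : Finset ι} {s e : ι → ℕ}
    (hs : ∀ i ∈ I, s i ≤ n) (he : ∀ i ∈ I, e i ≤ n)
    (hpos : 0 < ∑ i ∈ I, dist (p (s i)) (p (e i))) :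
    1 / (I.card : ℝ) ≤ reductionRate p n I s e := by
  have hI : 0 < (I.card : ℝ) :=
    Nat.cast_pos.2 (Finset.card_pos.2 (Finset.nonempty_of_sum_ne_zero hpos.ne'))
  rw [reductionRate, div_le_div_iff₀ hI hpos, one_mul, mul_comm]
  exact sum_dist_le_card_mul_routeLength p hs he

end Route

theorem stmt5 {B : Type*} [MetricSpace B] (t1s t1e t2s t2e t3s t3e : B)
    (hd1 : 0 < dist t1s t1e) (hd2 : 0 < dist t2s t2e) (hd3 : 0 < dist t3s t3e) :
    (1:ℝ)/3 ≤ (dist t1s t2s + dist t2s t3s + dist t3s t3e + dist t3e t2e + dist t2e t1e) / (dist t1s t1e + dist t2s t2e + dist t3s t3e) := by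
  let route : ℕ → B := fun i ↦ [t1s, t2s, t3s, t3e, t2e, t1e].getD i t1e
  simpa [reductionRate, routeLength, route, Finset.sum_range_succ, Fin.sum_univ_three] using
    stmt5_general route (n := 5) (I := .univ) (s := ![0, 1, 2]) (e := ![5, 4, 3])
      (by decide) (by decide) (by simpa [route, Fin.sum_univ_three] using by positivity)
end

section
/- The reduction rate of any mixed transport is bounded below as follows: (x + z + d3)/(x + z + d1 + 2·d3) ≤ (x1 + x2 + d3 + z2 + z1)/(d1 + d2 + d3). -/
/-!
Let `R` be the length of the mixed route, `D = x + z + d3` that of its shortcut through lane 3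
alone, and `c = d1 + d3`. By the triangle inequality `D ≤ R`; since the route visits both ends of
lane 2, also `d2 ≤ R`. As `t ↦ t / (t + c)` is increasing,
`D / (D + c) ≤ R / (R + c) ≤ R / (d2 + c)`.
-/

theorem div_add_le_div_add_of_le_of_le {K : Type*} [Semifield K] [LinearOrder K]
    [IsStrictOrderedRing K] {a b m c : K} (ha : 0 ≤ a) (hc : 0 ≤ c) (hac : 0 < a + c)
    (hmc : 0 < m + c) (hab : a ≤ b) (hmb : m ≤ b) : a / (a + c) ≤ b / (m + c) := by
  rw [div_le_div_iff₀ hac hmc]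
  calc
    a * (m + c) = a * m + a * c := mul_add a m c
    _ ≤ a * b + b * c := by gcongr
    _ = b * (a + c) := by ring

section Path

variable {B : Type*} [PseudoMetricSpace B] (p₁ p₂ p₃ q₃ q₂ q₁ : B)

theorem dist_shortcut_le_dist_path :
    dist p₁ p₃ + dist q₃ q₁ + dist p₃ q₃ ≤
      dist p₁ p₂ + dist p₂ p₃ + dist p₃ q₃ + dist q₃ q₂ + dist q₂ q₁ := by
  linarith [dist_triangle p₁ p₂ p₃, dist_triangle q₃ q₂ q₁]

theorem dist_inner_le_dist_path :
    dist p₂ q₂ ≤ dist p₁ p₂ + dist p₂ p₃ + dist p₃ q₃ + dist q₃ q₂ + dist q₂ q₁ := by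
  have hstart : 0 ≤ dist p₁ p₂ := dist_nonneg
  have hend : 0 ≤ dist q₂ q₁ := dist_nonneg
  linarith [dist_triangle4 p₂ p₃ q₃ q₂]

end Path

theorem stmt8_general {B : Type*} [PseudoMetricSpace B] (t1s t1e t2s t2e t3s t3e : B)
    (hbound : 0 < dist t1s t3s + dist t3e t1e + dist t1s t1e + 2 * dist t3s t3e)
    (hlanes : 0 < dist t1s t1e + dist t2s t2e + dist t3s t3e) :
    (dist t1s t3s + dist t3e t1e + dist t3s t3e) /
        (dist t1s t3s + dist t3e t1e + dist t1s t1e + 2 * dist t3s t3e) ≤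
      (dist t1s t2s + dist t2s t3s + dist t3s t3e + dist t3e t2e + dist t2e t1e) /
        (dist t1s t1e + dist t2s t2e + dist t3s t3e) := by
  have bound_eq : dist t1s t3s + dist t3e t1e + dist t1s t1e + 2 * dist t3s t3e =
      (dist t1s t3s + dist t3e t1e + dist t3s t3e) + (dist t1s t1e + dist t3s t3e) := by ring
  have lanes_eq : dist t1s t1e + dist t2s t2e + dist t3s t3e =
      dist t2s t2e + (dist t1s t1e + dist t3s t3e) := by ring
  rw [bound_eq] at hbound ⊢
  rw [lanes_eq] at hlanes ⊢
  exact div_add_le_div_add_of_le_of_le (by positivity) (by positivity) hbound hlanes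
    (dist_shortcut_le_dist_path t1s t2s t3s t3e t2e t1e)
    (dist_inner_le_dist_path t1s t2s t3s t3e t2e t1e)

theorem stmt8 {B : Type*} [MetricSpace B] (t1s t1e t2s t2e t3s t3e : B)
    (hd1 : 0 < dist t1s t1e) (hd2 : 0 < dist t2s t2e) (hd3 : 0 < dist t3s t3e) :
    (dist t1s t3s + dist t3e t1e + dist t3s t3e) / (dist t1s t3s + dist t3e t1e + dist t1s t1e + 2 * (dist t3s t3e)) ≤ (dist t1s t2s + dist t2s t3s + dist t3s t3e + dist t3e t2e + dist t2e t1e) / (dist t1s t1e + dist t2s t2e + dist t3s t3e) := by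
  exact stmt8_general t1s t1e t2s t2e t3s t3e (by positivity) (by positivity)
end
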